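/- Fix ω0 ∈ ℝ, σ0² > 0, 0 < σH² < σL², and h ∈ (0,1). Define the mixture posterior-mean action a*(s) := (∫ ω·f(s|ω)·φ(ω; ω0, σ0²) dω) / (∫ f(s|ω)·φ(ω; ω0, σ0²) dω) where f(s|ω) := h·φ(s; ω, σH²) + (1−h)·φ(s; ω, σL²). Then the expected quadratic loss under the mixture strictly exceeds the expected quadratic loss attainable if all sources were high quality: ∫∫ (ω − a*(s))²·f(s|ω)·φ(ω; ω0, σ0²) ds dω > σ0²·σH²/(σ0² + σH²). -/

import Mathlib

open MeasureTheory Real Filter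

/-- The Gaussian density with mean `m` and variance `v`. -/
noncomputable def gauss (x m v : ℝ) : ℝ :=
  (Real.sqrt (2 * Real.pi * v))⁻¹ * Real.exp (-(x - m) ^ 2 / (2 * v))

/-- The mixture signal density `f(s|ω) = h·φ(s;ω,vH) + (1−h)·φ(s;ω,vL)`. -/
noncomputable def mixDens (h vH vL s ω : ℝ) : ℝ :=
  h * gauss s ω vH + (1 - h) * gauss s ω vL

/-- The mixture posterior-mean action `a*(s)`. -/
noncomputable def aMix (ω0 v0 vH vL h s : ℝ) : ℝ :=
  (∫ ω : ℝ, ω * (mixDens h vH vL s ω * gauss ω ω0 v0)) /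
    (∫ ω : ℝ, mixDens h vH vL s ω * gauss ω ω0 v0)

/-!
A signal `s` from a source of noise variance `v` turns the prior into a Gaussian posterior with mean
`posteriorMean ω0 v0 v s` and variance `posteriorVar v0 v`. The conditional loss of an action `a` is
the posterior variance plus the squared distance of `a` from the posterior mean, so under that
source no action loses less than `posteriorVar v0 v` on average. The loss of `a` under the mixture
is the mixture of its losses under the two sources, and `posteriorVar v0 v` increases strictly with
`v`.
-/

section GaussianDensity

variable {m v : ℝ}

lemma gauss_eq_gaussianPDFReal (hv : 0 ≤ v) (x : ℝ) :
    gauss x m v = ProbabilityTheory.gaussianPDFReal m v.toNNReal x := by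
  rw [ProbabilityTheory.gaussianPDFReal, Real.coe_toNNReal v hv, gauss]

lemma gauss_pos (hv : 0 < v) (x m : ℝ) : 0 < gauss x m v := by
  unfold gauss
  positivity

@[fun_prop]
lemma measurable_gauss {α : Type*} [MeasurableSpace α] {f g k : α → ℝ}
    (hf : Measurable f) (hg : Measurable g) (hk : Measurable k) :
    Measurable fun x => gauss (f x) (g x) (k x) := by
  unfold gauss
  fun_prop

lemma integrable_mul_gauss_iff (hv : 0 < v) {f : ℝ → ℝ} :
    Integrable (fun x => f x * gauss x m v) ↔
      Integrable f (ProbabilityTheory.gaussianReal m v.toNNReal) := by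
  rw [ProbabilityTheory.gaussianReal_of_var_ne_zero _ (Real.toNNReal_pos.2 hv).ne',
    integrable_withDensity_iff_integrable_smul₀'
      (ProbabilityTheory.measurable_gaussianPDF _ _).aemeasurable
      (.of_forall fun _ => ProbabilityTheory.gaussianPDF_lt_top)]
  simp only [ProbabilityTheory.toReal_gaussianPDF, smul_eq_mul, gauss_eq_gaussianPDFReal hv.le,
    mul_comm]

lemma integral_mul_gauss (hv : 0 < v) (f : ℝ → ℝ) :
    ∫ x, f x * gauss x m v = ∫ x, f x ∂ProbabilityTheory.gaussianReal m v.toNNReal := by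
  rw [ProbabilityTheory.integral_gaussianReal_eq_integral_smul (Real.toNNReal_pos.2 hv).ne']
  simp only [smul_eq_mul, gauss_eq_gaussianPDFReal hv.le, mul_comm]

lemma integrable_gauss (hv : 0 < v) : Integrable fun x => gauss x m v := by
  simpa only [one_mul] using (integrable_mul_gauss_iff hv).2 (integrable_const (1 : ℝ))

lemma integral_gauss (hv : 0 < v) : ∫ x, gauss x m v = 1 := by
  simpa using integral_mul_gauss (m := m) hv fun _ => 1

lemma integrable_id_mul_gauss (hv : 0 < v) : Integrable fun x => x * gauss x m v :=
  (integrable_mul_gauss_iff hv).2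
    ((ProbabilityTheory.memLp_id_gaussianReal 1).integrable le_rfl)

lemma integral_id_mul_gauss (hv : 0 < v) : ∫ x, x * gauss x m v = m :=
  (integral_mul_gauss hv _).trans ProbabilityTheory.integral_id_gaussianReal

lemma integrable_sq_sub_mul_gauss (hv : 0 < v) (c : ℝ) :
    Integrable fun x => (x - c) ^ 2 * gauss x m v :=
  (integrable_mul_gauss_iff hv).2
    ((ProbabilityTheory.memLp_id_gaussianReal 2).sub (memLp_const c)).integrable_sq

lemma integral_sq_sub_mul_gauss (hv : 0 < v) (c : ℝ) :
    ∫ x, (x - c) ^ 2 * gauss x m v = v + (m - c) ^ 2 := by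
  let μ := ProbabilityTheory.gaussianReal m v.toNNReal
  have h_memLp : MemLp (fun x : ℝ => x - c) 2 μ :=
    (ProbabilityTheory.memLp_id_gaussianReal 2).sub (memLp_const c)
  have h_id : Integrable (fun x : ℝ => x) μ :=
    (ProbabilityTheory.memLp_id_gaussianReal 1).integrable le_rfl
  have h_mean : ∫ x, (x - c) ∂μ = m - c := by
    rw [integral_sub h_id (integrable_const c), ProbabilityTheory.integral_id_gaussianReal]
    simp
  have h_var : ProbabilityTheory.variance (fun x : ℝ => x - c) μ = v := by
    rw [ProbabilityTheory.variance_sub_const h_id.aestronglyMeasurable,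
      ProbabilityTheory.variance_fun_id_gaussianReal, Real.coe_toNNReal v hv.le]
  rw [ProbabilityTheory.variance_eq_sub h_memLp, h_mean, sub_eq_iff_eq_add] at h_var
  exact (integral_mul_gauss hv _).trans h_var

end GaussianDensity

section Posterior

/-- The mean of the posterior of `ω ∼ N(ω0, v0)` given a signal `s ∼ N(ω, v)`. -/
noncomputable def posteriorMean (ω0 v0 v s : ℝ) : ℝ :=
  (v0 * s + v * ω0) / (v0 + v)

/-- The variance of the posterior of `ω ∼ N(ω0, v0)` given a signal `s ∼ N(ω, v)`; it does not
depend on `s`. -/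
noncomputable def posteriorVar (v0 v : ℝ) : ℝ :=
  v0 * v / (v0 + v)

variable {ω0 v0 v : ℝ}

lemma posteriorVar_pos (hv0 : 0 < v0) (hv : 0 < v) : 0 < posteriorVar v0 v := by
  unfold posteriorVar
  positivity

lemma strictMonoOn_posteriorVar (hv0 : 0 < v0) :
    StrictMonoOn (posteriorVar v0) (Set.Ioi 0) := by
  intro v (hv : 0 < v) w (hw : 0 < w) hvw
  rw [posteriorVar, posteriorVar, div_lt_div_iff₀ (by positivity) (by positivity)]
  linarith [mul_lt_mul_of_pos_left hvw (mul_pos hv0 hv0)]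

@[fun_prop]
lemma measurable_posteriorMean : Measurable (posteriorMean ω0 v0 v) := by
  unfold posteriorMean
  fun_prop

lemma posteriorMean_mem_uIcc (hv0 : 0 < v0) (hv : 0 < v) (s : ℝ) :
    posteriorMean ω0 v0 v s ∈ Set.uIcc ω0 s := by
  have h_mem := convex_iff_div.1 (convex_uIcc (𝕜 := ℝ) ω0 s) Set.right_mem_uIcc Set.left_mem_uIcc
    hv0.le hv.le (add_pos hv0 hv)
  convert h_mem using 1
  simp only [posteriorMean, smul_eq_mul]
  ring

/-- Bayes' rule; `gauss s ω0 (v0 + v)` is the marginal density of the signal. -/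
lemma gauss_mul_gauss (hv0 : 0 < v0) (hv : 0 < v) (s ω : ℝ) :
    gauss s ω v * gauss ω ω0 v0 =
      gauss s ω0 (v0 + v) * gauss ω (posteriorMean ω0 v0 v s) (posteriorVar v0 v) := by
  have h_norm : 2 * π * v * (2 * π * v0) = 2 * π * (v0 + v) * (2 * π * posteriorVar v0 v) := by
    unfold posteriorVar
    field_simp
  have h_exponent : -(s - ω) ^ 2 / (2 * v) + -(ω - ω0) ^ 2 / (2 * v0) =
      -(s - ω0) ^ 2 / (2 * (v0 + v)) +
        -(ω - posteriorMean ω0 v0 v s) ^ 2 / (2 * posteriorVar v0 v) := by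
    unfold posteriorMean posteriorVar
    field_simp
    ring
  unfold gauss
  rw [mul_mul_mul_comm, mul_mul_mul_comm (√(2 * π * (v0 + v)))⁻¹, ← Real.exp_add, ← Real.exp_add,
    ← mul_inv, ← mul_inv, ← Real.sqrt_mul (by positivity), ← Real.sqrt_mul (by positivity),
    h_norm, h_exponent]

end Posterior

section MixtureAction

variable {ω0 v0 vH vL h : ℝ}

lemma mixDens_mul_gauss (hv0 : 0 < v0) (hvH : 0 < vH) (hvL : 0 < vL) (s ω : ℝ) :
    mixDens h vH vL s ω * gauss ω ω0 v0 =
      h * gauss s ω0 (v0 + vH) * gauss ω (posteriorMean ω0 v0 vH s) (posteriorVar v0 vH) +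
      (1 - h) * gauss s ω0 (v0 + vL) *
        gauss ω (posteriorMean ω0 v0 vL s) (posteriorVar v0 vL) := by
  rw [mixDens, add_mul, mul_assoc, mul_assoc, gauss_mul_gauss hv0 hvH, gauss_mul_gauss hv0 hvL,
    mul_assoc, mul_assoc]

lemma aMix_eq_weighted_posteriorMean (hv0 : 0 < v0) (hvH : 0 < vH) (hvL : 0 < vL) (s : ℝ) :
    aMix ω0 v0 vH vL h s =
      (h * gauss s ω0 (v0 + vH) * posteriorMean ω0 v0 vH s +
        (1 - h) * gauss s ω0 (v0 + vL) * posteriorMean ω0 v0 vL s) /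
      (h * gauss s ω0 (v0 + vH) + (1 - h) * gauss s ω0 (v0 + vL)) := by
  have hH := posteriorVar_pos hv0 hvH
  have hL := posteriorVar_pos hv0 hvL
  simp only [aMix, mixDens_mul_gauss hv0 hvH hvL, mul_add, mul_left_comm _ (_ * gauss s ω0 _) _]
  rw [integral_add ((integrable_gauss hH).const_mul _) ((integrable_gauss hL).const_mul _),
    integral_add ((integrable_id_mul_gauss hH).const_mul _)
      ((integrable_id_mul_gauss hL).const_mul _)]
  simp only [integral_const_mul, integral_gauss hH, integral_gauss hL, integral_id_mul_gauss hH,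
    integral_id_mul_gauss hL, mul_one]

lemma measurable_aMix (hv0 : 0 < v0) (hvH : 0 < vH) (hvL : 0 < vL) :
    Measurable (aMix ω0 v0 vH vL h) := by
  simp only [funext (aMix_eq_weighted_posteriorMean hv0 hvH hvL)]
  fun_prop

lemma aMix_mem_uIcc (hv0 : 0 < v0) (hvH : 0 < vH) (hvL : 0 < vL) (hh0 : 0 ≤ h) (hh1 : h < 1)
    (s : ℝ) : aMix ω0 v0 vH vL h s ∈ Set.uIcc ω0 s := by
  have h_one_sub : 0 < 1 - h := sub_pos.2 hh1
  have hH : 0 < gauss s ω0 (v0 + vH) := gauss_pos (by positivity) s ω0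
  have hL : 0 < gauss s ω0 (v0 + vL) := gauss_pos (by positivity) s ω0
  have h_mem := convex_iff_div.1 (convex_uIcc (𝕜 := ℝ) ω0 s)
    (posteriorMean_mem_uIcc hv0 hvH s) (posteriorMean_mem_uIcc hv0 hvL s)
    (mul_nonneg hh0 hH.le) (mul_pos h_one_sub hL).le (by positivity)
  rw [aMix_eq_weighted_posteriorMean hv0 hvH hvL]
  convert h_mem using 1
  simp only [smul_eq_mul]
  ring

end MixtureAction

section ExpectedLoss

/-- The expected quadratic loss of the action rule `a` when `ω ∼ N(ω0, v0)` and `f s ω` is the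
density of the signal `s` in the state `ω`. -/
noncomputable def expectedLoss (ω0 v0 : ℝ) (f : ℝ → ℝ → ℝ) (a : ℝ → ℝ) : ℝ :=
  ∫ ω : ℝ, (∫ s : ℝ, (ω - a s) ^ 2 * f s ω) * gauss ω ω0 v0

/-- The quadratic loss of the action rule `a` weighted by the joint density of state and signal, as
a function of the pair `(ω, s)`. Its integral over the plane is the expected loss, in which the
order of integration may then be reversed. -/
noncomputable def lossDensity (ω0 v0 : ℝ) (f : ℝ → ℝ → ℝ) (a : ℝ → ℝ) (z : ℝ × ℝ) : ℝ :=
  (z.1 - a z.2) ^ 2 * (f z.2 z.1 * gauss z.1 ω0 v0)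

variable {ω0 v0 v vH vL h : ℝ} {f : ℝ → ℝ → ℝ} {a : ℝ → ℝ}

lemma integral_lossDensity (hf : Integrable (lossDensity ω0 v0 f a)) :
    ∫ z, lossDensity ω0 v0 f a z = expectedLoss ω0 v0 f a := by
  rw [Measure.volume_eq_prod, integral_prod _ hf]
  simp only [expectedLoss, lossDensity, ← integral_mul_const, mul_assoc]

lemma integrable_lossDensity_left (hv0 : 0 < v0) (hv : 0 < v) (a : ℝ → ℝ) (s : ℝ) :
    Integrable fun ω => lossDensity ω0 v0 (gauss · · v) a (ω, s) := by
  simp only [lossDensity, gauss_mul_gauss hv0 hv, mul_left_comm _ (gauss s _ _)]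
  exact (integrable_sq_sub_mul_gauss (posteriorVar_pos hv0 hv) _).const_mul _

lemma integral_lossDensity_left (hv0 : 0 < v0) (hv : 0 < v) (a : ℝ → ℝ) (s : ℝ) :
    ∫ ω, lossDensity ω0 v0 (gauss · · v) a (ω, s) =
      (posteriorVar v0 v + (posteriorMean ω0 v0 v s - a s) ^ 2) * gauss s ω0 (v0 + v) := by
  simp only [lossDensity, gauss_mul_gauss hv0 hv, mul_left_comm _ (gauss s _ _)]
  rw [integral_const_mul, integral_sq_sub_mul_gauss (posteriorVar_pos hv0 hv), mul_comm]

lemma integrable_lossDensity_of_integrable_bias (hv0 : 0 < v0) (hv : 0 < v) (ha : Measurable a)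
    (h_bias : Integrable fun s =>
      (posteriorMean ω0 v0 v s - a s) ^ 2 * gauss s ω0 (v0 + v)) :
    Integrable (lossDensity ω0 v0 (gauss · · v) a) := by
  have h_meas : Measurable (lossDensity ω0 v0 (gauss · · v) a) := by
    unfold lossDensity
    fun_prop
  have h_nonneg (z : ℝ × ℝ) : 0 ≤ lossDensity ω0 v0 (gauss · · v) a z :=
    mul_nonneg (sq_nonneg _) (mul_pos (gauss_pos hv _ _) (gauss_pos hv0 _ _)).le
  rw [Measure.volume_eq_prod, integrable_prod_iff' h_meas.aestronglyMeasurable]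
  refine ⟨.of_forall (integrable_lossDensity_left hv0 hv a), ?_⟩
  simp only [Real.norm_of_nonneg (h_nonneg _), integral_lossDensity_left hv0 hv, add_mul]
  exact ((integrable_gauss (add_pos hv0 hv)).const_mul _).add h_bias

-- Both the action and the posterior mean lie between `ω0` and `s`, so the bias is at most
-- `|s - ω0|`, which is square integrable.
lemma integrable_lossDensity_of_mem_uIcc (hv0 : 0 < v0) (hv : 0 < v) (ha : Measurable a)
    (h_mem : ∀ s, a s ∈ Set.uIcc ω0 s) :
    Integrable (lossDensity ω0 v0 (gauss · · v) a) := by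
  refine integrable_lossDensity_of_integrable_bias hv0 hv ha ?_
  refine (integrable_sq_sub_mul_gauss (m := ω0) (add_pos hv0 hv) ω0).mono'
    (Measurable.aestronglyMeasurable (by fun_prop)) (.of_forall fun s => ?_)
  have h_gauss := gauss_pos (add_pos hv0 hv) s ω0
  have h_bias_le : |posteriorMean ω0 v0 v s - a s| ≤ |s - ω0| := by
    rw [abs_sub_comm s]
    exact Real.dist_le_of_mem_uIcc (posteriorMean_mem_uIcc hv0 hv s) (h_mem s)
  rw [Real.norm_of_nonneg (by positivity)]
  exact mul_le_mul_of_nonneg_right (sq_le_sq.2 h_bias_le) h_gauss.le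

lemma posteriorVar_le_expectedLoss (hv0 : 0 < v0) (hv : 0 < v)
    (hf : Integrable (lossDensity ω0 v0 (gauss · · v) a)) :
    posteriorVar v0 v ≤ expectedLoss ω0 v0 (gauss · · v) a := by
  have h_gauss := integrable_gauss (m := ω0) (add_pos hv0 hv)
  calc posteriorVar v0 v = ∫ s, posteriorVar v0 v * gauss s ω0 (v0 + v) := by
        rw [integral_const_mul, integral_gauss (add_pos hv0 hv), mul_one]
    _ ≤ ∫ s, ∫ ω, lossDensity ω0 v0 (gauss · · v) a (ω, s) := by
        refine integral_mono (h_gauss.const_mul _) hf.integral_prod_right fun s => ?_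
        simp only [integral_lossDensity_left hv0 hv]
        exact mul_le_mul_of_nonneg_right (le_add_of_nonneg_right (sq_nonneg _))
          (gauss_pos (add_pos hv0 hv) s ω0).le
    _ = expectedLoss ω0 v0 (gauss · · v) a := by
        rw [← integral_lossDensity hf, Measure.volume_eq_prod, integral_prod_symm _ hf]

lemma expectedLoss_mixDens (hH : Integrable (lossDensity ω0 v0 (gauss · · vH) a))
    (hL : Integrable (lossDensity ω0 v0 (gauss · · vL) a)) :
    expectedLoss ω0 v0 (mixDens h vH vL) a =
      h * expectedLoss ω0 v0 (gauss · · vH) a + (1 - h) * expectedLoss ω0 v0 (gauss · · vL) a := by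
  have h_mix : lossDensity ω0 v0 (mixDens h vH vL) a = fun z =>
      h * lossDensity ω0 v0 (gauss · · vH) a z +
        (1 - h) * lossDensity ω0 v0 (gauss · · vL) a z := by
    funext z
    simp only [lossDensity, mixDens]
    ring
  have hf : Integrable (lossDensity ω0 v0 (mixDens h vH vL) a) :=
    h_mix ▸ (hH.const_mul h).add (hL.const_mul (1 - h))
  rw [← integral_lossDensity hf, ← integral_lossDensity hH, ← integral_lossDensity hL, h_mix,
    integral_add (hH.const_mul h) (hL.const_mul (1 - h)), integral_const_mul, integral_const_mul]

lemma posteriorVar_lt_expectedLoss_mixDens (hv0 : 0 < v0) (hvH : 0 < vH) (hHL : vH < vL)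
    (hh0 : 0 ≤ h) (hh1 : h < 1) (hH : Integrable (lossDensity ω0 v0 (gauss · · vH) a))
    (hL : Integrable (lossDensity ω0 v0 (gauss · · vL) a)) :
    posteriorVar v0 vH < expectedLoss ω0 v0 (mixDens h vH vL) a := by
  have hvL : 0 < vL := hvH.trans hHL
  have h_one_sub : 0 < 1 - h := sub_pos.2 hh1
  calc posteriorVar v0 vH = h * posteriorVar v0 vH + (1 - h) * posteriorVar v0 vH := by ring
    _ < h * posteriorVar v0 vH + (1 - h) * posteriorVar v0 vL :=
        (add_lt_add_iff_left _).2
          (mul_lt_mul_of_pos_left (strictMonoOn_posteriorVar hv0 hvH hvL hHL) h_one_sub)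
    _ ≤ h * expectedLoss ω0 v0 (gauss · · vH) a +
          (1 - h) * expectedLoss ω0 v0 (gauss · · vL) a := by
        gcongr
        · exact posteriorVar_le_expectedLoss hv0 hvH hH
        · exact posteriorVar_le_expectedLoss hv0 hvL hL
    _ = expectedLoss ω0 v0 (mixDens h vH vL) a := (expectedLoss_mixDens hH hL).symm

end ExpectedLoss

/-- Lemma 2 (`lem:Hbetter`, Gaussian version): the expected quadratic loss under the mixture
of source qualities strictly exceeds the loss attainable if all sources were high quality. -/
theorem stmt_7 (ω0 v0 vH vL h : ℝ) (hv0 : 0 < v0) (hvH : 0 < vH) (hHL : vH < vL)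
    (hh0 : 0 < h) (hh1 : h < 1) :
    v0 * vH / (v0 + vH) <
      ∫ ω : ℝ,
        (∫ s : ℝ, (ω - aMix ω0 v0 vH vL h s) ^ 2 * mixDens h vH vL s ω) *
          gauss ω ω0 v0 := by
  have hvL : 0 < vL := hvH.trans hHL
  have h_meas : Measurable (aMix ω0 v0 vH vL h) := measurable_aMix hv0 hvH hvL
  have h_mem : ∀ s, aMix ω0 v0 vH vL h s ∈ Set.uIcc ω0 s :=
    aMix_mem_uIcc hv0 hvH hvL hh0.le hh1
  exact posteriorVar_lt_expectedLoss_mixDens hv0 hvH hHL hh0.le hh1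
    (integrable_lossDensity_of_mem_uIcc hv0 hvH h_meas h_mem)
    (integrable_lossDensity_of_mem_uIcc hv0 hvL h_meas h_mem)
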